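/- Soundness of FOLPb: For every constant specification CS and every formula φ, if ⊢_CS φ then φ is valid in every Fitting model for FOLPb meeting CS. -/

import Mathlib

/-- Justification terms of first-order justification logic (FOLPb / FOJT45). -/
inductive JTerm : Type
  | jvar : Nat → JTerm
  | jconst : Nat → JTerm
  | app : JTerm → JTerm → JTerm
  | plus : JTerm → JTerm → JTerm
  | bang : JTerm → JTerm
  | bb : JTerm → JTerm
  | gen : Nat → JTerm → JTerm
  | quest : JTerm → JTerm
  deriving DecidableEq

namespace JTerm

/-- Basic variables occurring as `gen` subscripts in a term. -/
def gvars : JTerm → Finset Nat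
  | jvar _ => ∅
  | jconst _ => ∅
  | app t s => t.gvars ∪ s.gvars
  | plus t s => t.gvars ∪ s.gvars
  | bang t => t.gvars
  | bb t => t.gvars
  | gen x t => insert x t.gvars
  | quest t => t.gvars

end JTerm

/-- Formulas of first-order justification logic.  Individual "variables" are either
basic variables (`Sum.inl n`, which may be quantified and appear as `gen` subscripts)
or extra constants from `V` (witness variables / domain members), which are never
quantified. -/
inductive Fml (V : Type) : Type
  | atom : Nat → List (Nat ⊕ V) → Fml V
  | bot : Fml V
  | imp : Fml V → Fml V → Fml V
  | all : Nat → Fml V → Fml V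
  | box : JTerm → Finset (Nat ⊕ V) → Fml V → Fml V

namespace Fml

variable {V : Type} [DecidableEq V]

def neg (φ : Fml V) : Fml V := φ.imp .bot
def orr (φ ψ : Fml V) : Fml V := φ.neg.imp ψ
def andd (φ ψ : Fml V) : Fml V := (φ.imp ψ.neg).neg
def ex (x : Nat) (φ : Fml V) : Fml V := (Fml.all x φ.neg).neg

/-- Free individual variables.  Following the paper, `fv (t :_X φ) = X`. -/
def fv : Fml V → Finset (Nat ⊕ V)
  | atom _ l => l.toFinset
  | bot => ∅
  | imp φ ψ => φ.fv ∪ ψ.fv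
  | all x φ => φ.fv \ {Sum.inl x}
  | box _ X _ => X

/-- Substitution of `e` for the free occurrences of the individual variable `x`. -/
def subst (x e : Nat ⊕ V) : Fml V → Fml V
  | atom P l => atom P (l.map fun v => if v = x then e else v)
  | bot => bot
  | imp φ ψ => imp (subst x e φ) (subst x e ψ)
  | all y φ => if x = Sum.inl y then all y φ else all y (subst x e φ)
  | box t X φ =>
      if x ∈ X then box t (X.image fun v => if v = x then e else v) (subst x e φ)
      else box t X φ

/-- `e` is free for `x` in the given formula. -/
def freeFor (e x : Nat ⊕ V) : Fml V → Prop
  | atom _ _ => True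
  | bot => True
  | imp φ ψ => freeFor e x φ ∧ freeFor e x ψ
  | all y φ => x ∉ (Fml.all y φ).fv ∨ (e ≠ Sum.inl y ∧ freeFor e x φ)
  | box _ X φ => freeFor e x φ ∧ (e ∈ φ.fv → e ∈ X)

/-- All individual variables occurring in a formula (free, bound, in subscripts,
or as `gen` subscripts of justification terms). -/
def allVars : Fml V → Finset (Nat ⊕ V)
  | atom _ l => l.toFinset
  | bot => ∅
  | imp φ ψ => φ.allVars ∪ ψ.allVars
  | all x φ => insert (Sum.inl x) φ.allVars
  | box t X φ => X ∪ t.gvars.image Sum.inl ∪ φ.allVars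

/-- The set of witness variables / domain constants (`Sum.inr`-variables) occurring
in a formula. -/
def wvars (φ : Fml V) : Finset (Nat ⊕ V) := φ.allVars.filter fun v => v.isRight

/-- Free basic variables. -/
def fbv (φ : Fml V) : Finset Nat :=
  φ.fv.biUnion fun v => match v with | Sum.inl n => {n} | Sum.inr _ => ∅

/-- Universal closure (over the free basic variables). -/
noncomputable def close (φ : Fml V) : Fml V := φ.fbv.toList.foldr Fml.all φ

/-- Renaming of the free individual variables of a formula. -/
def renameFree (ρ : (Nat ⊕ V) → (Nat ⊕ V)) : Fml V → Fml V
  | atom P l => atom P (l.map ρ)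
  | bot => bot
  | imp φ ψ => imp (renameFree ρ φ) (renameFree ρ ψ)
  | all y φ => all y (renameFree (Function.update ρ (Sum.inl y) (Sum.inl y)) φ)
  | box t X φ => box t (X.image ρ) (renameFree (fun v => if v ∈ X then ρ v else v) φ)

/-- Replacement of *every* occurrence of the individual variable `a` by `e`
(used for witness variables, which are never bound). -/
def replaceAll (a e : Nat ⊕ V) : Fml V → Fml V
  | atom P l => atom P (l.map fun v => if v = a then e else v)
  | bot => bot
  | imp φ ψ => imp (replaceAll a e φ) (replaceAll a e ψ)
  | all x φ => all x (replaceAll a e φ)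
  | box t X φ => box t (X.image fun v => if v = a then e else v) (replaceAll a e φ)

/-- Change the type of extra constants. -/
def vmap {V' : Type} [DecidableEq V'] (f : V → V') : Fml V → Fml V'
  | atom P l => atom P (l.map (Sum.map id f))
  | bot => bot
  | imp φ ψ => imp (vmap f φ) (vmap f ψ)
  | all x φ => all x (vmap f φ)
  | box t X φ => box t (X.image (Sum.map id f)) (vmap f φ)

def size : Fml V → Nat
  | atom _ _ => 1
  | bot => 1
  | imp φ ψ => φ.size + ψ.size + 1
  | all _ φ => φ.size + 1
  | box _ _ φ => φ.size + 1

/-- Simultaneous substitution of all free basic variables. -/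
def instAll (σ : Nat → Nat ⊕ V) : Fml V → Fml V
  | atom P l => atom P (l.map fun v => match v with | Sum.inl n => σ n | w => w)
  | bot => bot
  | imp φ ψ => imp (instAll σ φ) (instAll σ ψ)
  | all x φ => all x (instAll (Function.update σ x (Sum.inl x)) φ)
  | box t X φ =>
      box t (X.image fun v => match v with | Sum.inl n => σ n | w => w)
        (instAll (fun n => if Sum.inl n ∈ X then σ n else Sum.inl n) φ)

theorem size_subst (x e : Nat ⊕ V) : ∀ φ : Fml V, (φ.subst x e).size = φ.size := by
  intro φ
  induction φ with
  | atom P l => simp [subst, size]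
  | bot => simp [subst, size]
  | imp φ ψ ihφ ihψ => simp [subst, size, ihφ, ihψ]
  | all y φ ih => by_cases h : x = Sum.inl y <;> simp [subst, size, h, ih]
  | box t X φ ih => by_cases h : x ∈ X <;> simp [subst, size, h, ih]

theorem size_instAll : ∀ (φ : Fml V) (σ : Nat → Nat ⊕ V), (φ.instAll σ).size = φ.size := by
  intro φ
  induction φ with
  | atom P l => intro σ; simp [instAll, size]
  | bot => intro σ; simp [instAll, size]
  | imp φ ψ ihφ ihψ => intro σ; simp [instAll, size, ihφ, ihψ]
  | all y φ ih => intro σ; simp [instAll, size, ih]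
  | box t X φ ih => intro σ; simp [instAll, size, ih]

end Fml

/-- The two logics considered in the paper. -/
inductive Logic : Type
  | folpb
  | fojt45

/-- Axioms of the systems: **A1** (a standard Hilbert axiomatization of classical
first-order logic), **A2**, **A3**, **B1**–**B5**, together with the Barcan axiom
**Bb** (for FOLPb only) and negative introspection **B6** (for FOJT45 only). -/
inductive IsAxiom {V : Type} [DecidableEq V] : Logic → Fml V → Prop
  | a1k (L) (φ ψ : Fml V) : IsAxiom L (φ.imp (ψ.imp φ))
  | a1s (L) (φ ψ χ : Fml V) :
      IsAxiom L ((φ.imp (ψ.imp χ)).imp ((φ.imp ψ).imp (φ.imp χ)))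
  | a1dne (L) (φ : Fml V) : IsAxiom L (φ.neg.neg.imp φ)
  | a1inst (L) (x : Nat) (e : Nat ⊕ V) (φ : Fml V) (h : φ.freeFor e (Sum.inl x)) :
      IsAxiom L ((Fml.all x φ).imp (φ.subst (Sum.inl x) e))
  | a1allImp (L) (x : Nat) (φ ψ : Fml V) :
      IsAxiom L ((Fml.all x (φ.imp ψ)).imp ((Fml.all x φ).imp (Fml.all x ψ)))
  | a1vac (L) (x : Nat) (φ : Fml V) (h : Sum.inl x ∉ φ.fv) :
      IsAxiom L (φ.imp (Fml.all x φ))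
  | a2 (L) (t : JTerm) (X : Finset (Nat ⊕ V)) (y : Nat ⊕ V) (φ : Fml V)
      (h : y ∉ φ.fv) :
      IsAxiom L ((Fml.box t (insert y X) φ).imp (Fml.box t X φ))
  | a3 (L) (t : JTerm) (X : Finset (Nat ⊕ V)) (y : Nat ⊕ V) (φ : Fml V) :
      IsAxiom L ((Fml.box t X φ).imp (Fml.box t (insert y X) φ))
  | b1 (L) (t : JTerm) (X : Finset (Nat ⊕ V)) (φ : Fml V) :
      IsAxiom L ((Fml.box t X φ).imp φ)
  | b2 (L) (t s : JTerm) (X : Finset (Nat ⊕ V)) (φ ψ : Fml V) :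
      IsAxiom L ((Fml.box t X (φ.imp ψ)).imp
        ((Fml.box s X φ).imp (Fml.box (t.app s) X ψ)))
  | b3l (L) (t s : JTerm) (X : Finset (Nat ⊕ V)) (φ : Fml V) :
      IsAxiom L ((Fml.box t X φ).imp (Fml.box (t.plus s) X φ))
  | b3r (L) (t s : JTerm) (X : Finset (Nat ⊕ V)) (φ : Fml V) :
      IsAxiom L ((Fml.box s X φ).imp (Fml.box (t.plus s) X φ))
  | b4 (L) (t : JTerm) (X : Finset (Nat ⊕ V)) (φ : Fml V) :
      IsAxiom L ((Fml.box t X φ).imp (Fml.box t.bang X (Fml.box t X φ)))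
  | b5 (L) (t : JTerm) (X : Finset (Nat ⊕ V)) (x : Nat) (φ : Fml V)
      (h : Sum.inl x ∉ X) :
      IsAxiom L ((Fml.box t X φ).imp (Fml.box (t.gen x) X (Fml.all x φ)))
  | bb (t : JTerm) (X : Finset (Nat ⊕ V)) (y : Nat) (φ : Fml V)
      (h : Sum.inl y ∉ X) :
      IsAxiom Logic.folpb
        ((Fml.all y (Fml.box t (insert (Sum.inl y) X) φ)).imp
          (Fml.box t.bb X (Fml.all y φ)))
  | b6 (t : JTerm) (X : Finset (Nat ⊕ V)) (φ : Fml V) :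
      IsAxiom Logic.fojt45
        ((Fml.box t X φ).neg.imp (Fml.box t.quest X (Fml.box t X φ).neg))

/-- Derivability from a set `Γ` of assumptions, with extra axioms from the constant
specification `CS`; generalization is only applied to variables not free in `Γ`. -/
inductive Deriv {V : Type} [DecidableEq V] (L : Logic) (CS : Set (Fml V))
    (Γ : Set (Fml V)) : Fml V → Prop
  | ax {φ : Fml V} : IsAxiom L φ → Deriv L CS Γ φ
  | cs {φ : Fml V} : φ ∈ CS → Deriv L CS Γ φ
  | hyp {φ : Fml V} : φ ∈ Γ → Deriv L CS Γ φ
  | mp {φ ψ : Fml V} : Deriv L CS Γ (φ.imp ψ) → Deriv L CS Γ φ → Deriv L CS Γ ψ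
  | genR {φ : Fml V} {x : Nat} : Deriv L CS Γ φ →
      (∀ ψ ∈ Γ, Sum.inl x ∉ ψ.fv) → Deriv L CS Γ (Fml.all x φ)

/-- `CS` is a constant specification: each member has the form `c : ψ` with `ψ` an axiom. -/
def IsCS {V : Type} [DecidableEq V] (L : Logic) (CS : Set (Fml V)) : Prop :=
  ∀ χ ∈ CS, ∃ (c : Nat) (φ : Fml V),
    χ = Fml.box (JTerm.jconst c) ∅ φ ∧ IsAxiom L φ

/-- `CS` is axiomatically appropriate. -/
def AxAppropriate {V : Type} [DecidableEq V] (L : Logic) (CS : Set (Fml V)) : Prop :=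
  ∀ φ : Fml V, IsAxiom L φ → ∃ c : Nat, Fml.box (JTerm.jconst c) ∅ φ ∈ CS

def Consistent {V : Type} [DecidableEq V] (L : Logic) (CS Γ : Set (Fml V)) : Prop :=
  ¬ Deriv L CS Γ Fml.bot

def MaxConsistent {V : Type} [DecidableEq V] (L : Logic) (CS Γ : Set (Fml V)) : Prop :=
  Consistent L CS Γ ∧ ∀ Δ : Set (Fml V), Γ ⊆ Δ → Consistent L CS Δ → Δ = Γ

/-- Formulas of the basic language (no witness variables). -/
abbrev FmlB := Fml Empty

/-- Henkin formulas: formulas possibly containing witness variables (`Sum.inr`). -/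
abbrev FmlW := Fml Nat

/-- A basic-language formula regarded as a Henkin formula. -/
def liftB : FmlB → FmlW := Fml.vmap fun e => e.elim

/-- A Henkin formula containing no witness variables. -/
def NoWitness (φ : FmlW) : Prop := ∀ v ∈ φ.allVars, v.isLeft = true

/-- Two formulas are variable variants: one is obtained from the other by a
bijective renaming of free individual variables. -/
def VarVariant {V : Type} [DecidableEq V] (φ ψ : Fml V) : Prop :=
  ∃ ρ : (Nat ⊕ V) → (Nat ⊕ V), Function.Bijective ρ ∧ ψ = Fml.renameFree ρ φ

/-- A constant specification is variant closed. -/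
def VariantClosed {V : Type} [DecidableEq V] (CS : Set (Fml V)) : Prop :=
  ∀ (φ ψ : Fml V) (c : Nat), VarVariant φ ψ →
    (Fml.box (JTerm.jconst c) ∅ φ ∈ CS ↔ Fml.box (JTerm.jconst c) ∅ ψ ∈ CS)

/-- The extension `CS(V)` of a basic constant specification to the language with
witness variables: justified axioms with some free basic variables replaced by
distinct witness variables. -/
def CSV (CS : Set FmlB) : Set FmlW :=
  {χ | ∃ (c : Nat) (φ : FmlB) (ρ : (Nat ⊕ Nat) → (Nat ⊕ Nat)),
    Fml.box (JTerm.jconst c) ∅ φ ∈ CS ∧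
    Function.Injective ρ ∧
    (∀ m : Nat, ρ (Sum.inr m) = Sum.inr m) ∧
    (∀ n : Nat, ρ (Sum.inl n) = Sum.inl n ∨ ∃ m : Nat, ρ (Sum.inl n) = Sum.inr m) ∧
    χ = Fml.box (JTerm.jconst c) ∅ (Fml.renameFree ρ (liftB φ))}

/-- `Γ^#`. -/
def sharp (Γ : Set FmlW) : Set FmlW :=
  {χ | ∃ (t : JTerm) (X : Finset (Nat ⊕ Nat)) (φ : FmlW),
    Fml.box t X φ ∈ Γ ∧ (Fml.box t X φ : FmlW).fbv = ∅ ∧ X = φ.wvars ∧ χ = φ.close}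

/-! ### Templates -/

inductive Tmpl : Type
  | pvar : Nat → Tmpl
  | neg : Tmpl → Tmpl
  | orr : Tmpl → Tmpl → Tmpl
  | andd : Tmpl → Tmpl → Tmpl
  | box : Tmpl → Tmpl

namespace Tmpl

def letters : Tmpl → Multiset Nat
  | pvar i => {i}
  | neg G => G.letters
  | orr G H => G.letters + H.letters
  | andd G H => G.letters + H.letters
  | box G => G.letters

/-- No propositional letter occurs more than once. -/
def IsTemplate (F : Tmpl) : Prop := F.letters.Nodup

def Positive : Tmpl → Prop
  | pvar _ => True
  | neg _ => False
  | orr G H => G.Positive ∧ H.Positive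
  | andd G H => G.Positive ∧ H.Positive
  | box G => G.Positive

def Disjunctive : Tmpl → Prop
  | pvar _ => True
  | neg _ => False
  | orr G H => G.Disjunctive ∧ H.Disjunctive
  | andd _ _ => False
  | box G => G.Disjunctive

end Tmpl

/-- The instantiation set `⟦F(φ⃗)⟧`, where the valuation `v` gives the Henkin formula
substituted for each propositional letter. -/
inductive Inst (v : Nat → FmlW) : Tmpl → FmlW → Prop
  | pvar (i : Nat) : Inst v (Tmpl.pvar i) (v i)
  | neg {G : Tmpl} {ψ : FmlW} : Inst v G ψ → Inst v (Tmpl.neg G) ψ.neg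
  | orr {G H : Tmpl} {ψ θ : FmlW} :
      Inst v G ψ → Inst v H θ → Inst v (Tmpl.orr G H) (ψ.orr θ)
  | andd {G H : Tmpl} {ψ θ : FmlW} :
      Inst v G ψ → Inst v H θ → Inst v (Tmpl.andd G H) (ψ.andd θ)
  | box {G : Tmpl} {ψ : FmlW} (t : JTerm) :
      Inst v G ψ → Inst v (Tmpl.box G) (Fml.box t ψ.wvars ψ)

/-- The set of negations of members of `⟦F(φ⃗)⟧`. -/
def NegInst (v : Nat → FmlW) (F : Tmpl) : Set FmlW :=
  {χ | ∃ ψ : FmlW, Inst v F ψ ∧ χ = ψ.neg}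

/-- `Δ` admits instantiation (relative to the basic constant specification `CS`). -/
def AdmitsInst (CS : Set FmlB) (Δ : Set FmlW) : Prop :=
  ∀ F : Tmpl, F.IsTemplate → F.Disjunctive →
    ∀ (v : Nat → FmlW) (q x : Nat) (φ : FmlW),
      Consistent Logic.folpb (CSV CS)
        (Δ ∪ NegInst (Function.update v q (Fml.all x φ)) F) →
      ∃ a : Nat,
        Consistent Logic.folpb (CSV CS)
          (Δ ∪ NegInst (Function.update v q (φ.subst (Sum.inl x) (Sum.inr a))) F)

/-! ### Fitting models -/

/-- A Fitting model for FOLPb with constant domain `D`. -/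
structure FModel (D : Type) [DecidableEq D] where
  W : Type
  nonempty : Nonempty W
  R : W → W → Prop
  refl : ∀ w, R w w
  trans : ∀ {u v w}, R u v → R v w → R u w
  I : Nat → W → List D → Prop
  E : JTerm → Fml D → Set W
  condApp : ∀ (t s : JTerm) (φ ψ : Fml D), E t (φ.imp ψ) ∩ E s φ ⊆ E (t.app s) ψ
  condPlus : ∀ (t s : JTerm) (φ : Fml D), E t φ ∪ E s φ ⊆ E (t.plus s) φ
  condBang : ∀ (t : JTerm) (φ : Fml D) (X : Finset (Nat ⊕ D)),
    (∀ x ∈ X, x.isRight = true) → φ.wvars ⊆ X →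
    E t φ ⊆ E t.bang (Fml.box t X φ)
  condClosure : ∀ (t : JTerm) (φ : Fml D) {w w'},
    w ∈ E t φ → R w w' → w' ∈ E t φ
  condInst : ∀ (t : JTerm) (φ : Fml D) (x : Nat) (a : D) {w},
    w ∈ E t φ → w ∈ E t (φ.subst (Sum.inl x) (Sum.inr a))
  condGen : ∀ (t : JTerm) (φ : Fml D) (x : Nat), E t φ ⊆ E (t.gen x) (Fml.all x φ)
  condB : ∀ (t : JTerm) (φ : Fml D) (y : Nat) {w},
    (∀ a : D, w ∈ E t (φ.subst (Sum.inl y) (Sum.inr a))) →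
    w ∈ E t.bb (Fml.all y φ)

/-- Truth of a (closed) `D`-formula at a world. -/
def Truth {D : Type} [DecidableEq D] (M : FModel D) : M.W → Fml D → Prop
  | w, .atom P l => ∃ ds : List D, l = ds.map Sum.inr ∧ M.I P w ds
  | _, .bot => False
  | w, .imp φ ψ => Truth M w φ → Truth M w ψ
  | w, .all x φ => ∀ a : D, Truth M w (φ.subst (Sum.inl x) (Sum.inr a))
  | w, .box t _ φ => w ∈ M.E t φ ∧
      ∀ w', M.R w w' → ∀ σ : Nat → Nat ⊕ D, (∀ n, ∃ a : D, σ n = Sum.inr a) →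
        Truth M w' (φ.instAll σ)
  termination_by _ φ => φ.size
  decreasing_by
    all_goals simp [Fml.size, Fml.size_subst, Fml.size_instAll]
    all_goals omega

/-- A basic-language formula as a `D`-formula. -/
def toD {D : Type} [DecidableEq D] : FmlB → Fml D := Fml.vmap fun e => e.elim

/-- Validity in a model: the universal closure is true at every world. -/
def Valid {D : Type} [DecidableEq D] (M : FModel D) (φ : FmlB) : Prop :=
  ∀ w : M.W, Truth M w (toD φ.close)

/-- The model meets the constant specification `CS`. -/
def Meets {D : Type} [DecidableEq D] (M : FModel D) (CS : Set FmlB) : Prop :=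
  ∀ (c : Nat) (φ : FmlB), Fml.box (JTerm.jconst c) ∅ φ ∈ CS →
    ∀ w : M.W, w ∈ M.E (JTerm.jconst c) (toD φ)

/-! Under an assignment `ρ` of domain members to the basic variables, a basic formula `φ` becomes
a closed `D`-formula, and `Satisfies M w ρ φ` is its truth at `w`. All the substitution operations
(`subst`, `instAll`, `vmap`) are instances of one simultaneous substitution `Fml.inst`, whose
composition law turns the clauses of `Truth` into Tarskian clauses for `Satisfies`. In the clause
for `t:_X φ` the evidence concerns `φ` with only the variables in `X` replaced, and the variables
outside `X` are quantified over afresh at each accessible world. The first-order axioms are then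
read off the clauses, B1 is reflexivity of `R`, and the remaining justification axioms rest on
substitution identities and the closure conditions on the evidence function. -/

open Function

namespace Fml

section Inst

variable {V V' : Type} [DecidableEq V]

/-- The substitution that acts on basic variables only when they lie in `X`. Extra constants are
always replaced: `σ` has to carry them into the target language even where they are not listed
in a subscript. -/
def restrict (X : Finset (ℕ ⊕ V)) (σ : ℕ ⊕ V → ℕ ⊕ V') : ℕ ⊕ V → ℕ ⊕ V'
  | Sum.inl n => if Sum.inl n ∈ X then σ (Sum.inl n) else Sum.inl n
  | Sum.inr c => σ (Sum.inr c)

theorem restrict_of_mem {X : Finset (ℕ ⊕ V)} (σ : ℕ ⊕ V → ℕ ⊕ V') {v : ℕ ⊕ V}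
    (hv : v ∈ X) : restrict X σ v = σ v := by
  rcases v with n | c
  · exact if_pos hv
  · rfl

theorem restrict_inl_of_notMem {X : Finset (ℕ ⊕ V)} (σ : ℕ ⊕ V → ℕ ⊕ V') {n : ℕ}
    (hn : Sum.inl n ∉ X) : restrict X σ (Sum.inl n) = Sum.inl n :=
  if_neg hn

theorem restrict_congr {X : Finset (ℕ ⊕ V)} {σ τ : ℕ ⊕ V → ℕ ⊕ V'}
    (h : ∀ n, Sum.inl n ∈ X → σ (Sum.inl n) = τ (Sum.inl n))
    (hc : ∀ c, σ (Sum.inr c) = τ (Sum.inr c)) : restrict X σ = restrict X τ := by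
  ext1 (n | c)
  · by_cases hn : Sum.inl n ∈ X
    · simpa only [restrict_of_mem _ hn] using h n hn
    · simp only [restrict_inl_of_notMem _ hn]
  · exact hc c

theorem restrict_restrict (X : Finset (ℕ ⊕ V)) (σ : ℕ ⊕ V → ℕ ⊕ V') :
    restrict X (restrict X σ) = restrict X σ :=
  restrict_congr (fun _ hn => restrict_of_mem σ hn) fun _ => rfl

theorem restrict_eq_self {X : Finset (ℕ ⊕ V)} {σ : ℕ ⊕ V → ℕ ⊕ V'}
    (h : ∀ n, Sum.inl n ∉ X → σ (Sum.inl n) = Sum.inl n) : restrict X σ = σ := by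
  ext1 (n | c)
  · by_cases hn : Sum.inl n ∈ X
    · exact restrict_of_mem σ hn
    · rw [restrict_inl_of_notMem σ hn, h n hn]
  · rfl

theorem update_restrict_of_notMem {X : Finset (ℕ ⊕ V)} {x : ℕ} (hx : Sum.inl x ∉ X)
    (σ : ℕ ⊕ V → ℕ ⊕ V') :
    update (restrict X σ) (Sum.inl x) (Sum.inl x) = restrict X σ :=
  update_eq_self_iff.2 (restrict_inl_of_notMem σ hx).symm

theorem apply_eq_inr_of_restrict_eq_inr {X : Finset (ℕ ⊕ V)} {σ : ℕ ⊕ V → ℕ ⊕ V'}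
    {v : ℕ ⊕ V} {a : V'} (h : restrict X σ v = Sum.inr a) : σ v = Sum.inr a := by
  rcases v with n | c
  · by_cases hn : Sum.inl n ∈ X
    · rwa [restrict_of_mem σ hn] at h
    · simp [restrict_inl_of_notMem σ hn] at h
  · exact h

variable [DecidableEq V']

/-- Simultaneous substitution for the free basic variables and for all extra constants. It
generalizes `subst`, `instAll` and `vmap`, and like them does not rename bound variables. -/
def inst (σ : ℕ ⊕ V → ℕ ⊕ V') : Fml V → Fml V'
  | atom P l => atom P (l.map σ)
  | bot => bot
  | imp φ ψ => imp (inst σ φ) (inst σ ψ)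
  | all x φ => all x (inst (update σ (Sum.inl x) (Sum.inl x)) φ)
  | box t X φ => box t (X.image σ) (inst (restrict X σ) φ)

theorem inst_restrict_all {x : ℕ} {X : Finset (ℕ ⊕ V)} (hx : Sum.inl x ∉ X)
    (σ : ℕ ⊕ V → ℕ ⊕ V') (φ : Fml V) :
    (all x φ).inst (restrict X σ) = all x (φ.inst (restrict X σ)) := by
  rw [inst, update_restrict_of_notMem hx]

theorem inst_restrict_box (t : JTerm) (X : Finset (ℕ ⊕ V)) (σ : ℕ ⊕ V → ℕ ⊕ V') (φ : Fml V) :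
    (box t X φ).inst (restrict X σ) = box t (X.image σ) (φ.inst (restrict X σ)) := by
  rw [inst, restrict_restrict, Finset.image_congr fun v hv => restrict_of_mem σ hv]

theorem inst_congr {φ : Fml V} {σ τ : ℕ ⊕ V → ℕ ⊕ V'}
    (h : ∀ n, Sum.inl n ∈ φ.fv → σ (Sum.inl n) = τ (Sum.inl n))
    (hc : ∀ c, σ (Sum.inr c) = τ (Sum.inr c)) : φ.inst σ = φ.inst τ := by
  induction φ generalizing σ τ with
  | atom P l =>
    refine congrArg (atom P) (List.map_congr_left ?_)
    rintro (n | c) hv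
    · exact h n (List.mem_toFinset.2 hv)
    · exact hc c
  | bot => rfl
  | imp φ ψ ihφ ihψ =>
    exact congrArg₂ imp (ihφ (fun n hn => h n (Finset.mem_union_left _ hn)) hc)
      (ihψ (fun n hn => h n (Finset.mem_union_right _ hn)) hc)
  | all x φ ih =>
    refine congrArg (all x) (ih (fun n hn => ?_) fun c => by simpa using hc c)
    obtain rfl | hnx := eq_or_ne n x
    · simp
    · simpa [hnx] using h n (by simpa [fv, hnx] using hn)
  | box t X φ _ =>
    have himage : X.image σ = X.image τ := by
      refine Finset.image_congr ?_
      rintro (n | c) hv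
      · exact h n hv
      · exact hc c
    rw [inst, inst, himage, restrict_congr (X := X) h hc]

theorem inst_id (φ : Fml V) : φ.inst id = φ := by
  induction φ with
  | atom P l => simp [inst]
  | bot => rfl
  | imp φ ψ ihφ ihψ => rw [inst, ihφ, ihψ]
  | all x φ ih => rw [inst, show update id (Sum.inl x) (Sum.inl x) = id from update_eq_self _ _, ih]
  | box t X φ ih => rw [inst, restrict_eq_self fun _ _ => rfl, ih, Finset.image_id]

theorem instAll_eq_inst (φ : Fml V) (σ : ℕ → ℕ ⊕ V) :
    φ.instAll σ = φ.inst (Sum.elim σ Sum.inr) := by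
  have helim (σ : ℕ → ℕ ⊕ V) :
      (fun v => match v with | Sum.inl n => σ n | w => w) = Sum.elim σ Sum.inr := by
    ext1 (n | c) <;> rfl
  induction φ generalizing σ with
  | atom P l => rw [instAll, helim, inst]
  | bot => rfl
  | imp φ ψ ihφ ihψ => rw [instAll, ihφ, ihψ, inst]
  | all x φ ih => rw [instAll, ih, inst, Sum.update_elim_inl]
  | box t X φ ih =>
    rw [instAll, helim, ih, inst]
    congr 2
    ext1 (n | c) <;> rfl

theorem vmap_eq_inst (f : V → V') (φ : Fml V) : φ.vmap f = φ.inst (Sum.map id f) := by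
  induction φ with
  | atom P l => rfl
  | bot => rfl
  | imp φ ψ ihφ ihψ => rw [vmap, ihφ, ihψ, inst]
  | all x φ ih =>
    have hupdate : update (Sum.map id f) (Sum.inl x) (Sum.inl x) = Sum.map id f :=
      update_eq_self _ _
    rw [vmap, ih, inst, hupdate]
  | box t X φ ih => rw [vmap, ih, inst, restrict_eq_self fun _ _ => rfl]

theorem subst_inl_eq_inst (x : ℕ) (e : ℕ ⊕ V) (φ : Fml V) :
    φ.subst (Sum.inl x) e = φ.inst (update id (Sum.inl x) e) := by
  have hite : (fun v => if v = Sum.inl x then e else v) = update id (Sum.inl x) e := by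
    ext1 v
    rw [update_apply, id]
  have hid (z : ℕ ⊕ V) : update id z z = id := update_eq_self z id
  induction φ with
  | atom P l => rw [subst, hite, inst]
  | bot => rfl
  | imp φ ψ ihφ ihψ => rw [subst, ihφ, ihψ, inst]
  | all y φ ih =>
    obtain rfl | hxy := eq_or_ne x y
    · rw [subst, if_pos rfl, inst, update_idem, hid, inst_id]
    · have hne : (Sum.inl x : ℕ ⊕ V) ≠ Sum.inl y := Sum.inl_injective.ne hxy
      rw [subst, if_neg hne, ih, inst, update_comm hne, hid]
  | box t X φ ih =>
    by_cases hx : Sum.inl x ∈ X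
    · rw [subst, if_pos hx, hite, ih, inst, restrict_eq_self]
      rintro n hn
      exact update_of_ne (ne_of_mem_of_not_mem hx hn).symm _ _
    · have hfix : ∀ v ∈ X, update id (Sum.inl x) e v = id v := fun v hv =>
        update_of_ne (ne_of_mem_of_not_mem hv hx) _ _
      rw [subst, if_neg hx, inst, Finset.image_congr hfix, Finset.image_id,
        restrict_congr (τ := id) (fun n hn => hfix _ hn) fun _ => update_of_ne Sum.inr_ne_inl _ _,
        restrict_eq_self (σ := id) fun _ _ => rfl, inst_id]

theorem inst_update_of_notMem_fv {x : ℕ} {φ : Fml V} (hx : Sum.inl x ∉ φ.fv)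
    (σ : ℕ ⊕ V → ℕ ⊕ V') (e : ℕ ⊕ V') : φ.inst (update σ (Sum.inl x) e) = φ.inst σ :=
  inst_congr (fun _ hn => update_of_ne (ne_of_mem_of_not_mem hn hx) _ _) fun _ =>
    update_of_ne Sum.inr_ne_inl _ _

theorem subst_of_notMem_fv {x : ℕ} {φ : Fml V} (hx : Sum.inl x ∉ φ.fv) (e : ℕ ⊕ V) :
    φ.subst (Sum.inl x) e = φ := by
  rw [subst_inl_eq_inst, inst_update_of_notMem_fv hx, inst_id]

theorem mem_image_ite_iff {α : Type*} [DecidableEq α] {X : Finset α} {x e v : α} (hv : v ≠ x)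
    (he : v = e → v ∈ X) : v ∈ X.image (fun u => if u = x then e else u) ↔ v ∈ X := by
  grind

theorem inst_subst {x : ℕ} {e : ℕ ⊕ V} {φ : Fml V} (h : φ.freeFor e (Sum.inl x))
    (σ : ℕ ⊕ V → ℕ ⊕ V') :
    (φ.subst (Sum.inl x) e).inst σ = φ.inst (update σ (Sum.inl x) (σ e)) := by
  have hcomp (σ : ℕ ⊕ V → ℕ ⊕ V') :
      σ ∘ (fun v => if v = Sum.inl x then e else v) = update σ (Sum.inl x) (σ e) := by
    ext1 v
    rw [update_apply, comp_apply, apply_ite σ]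
  induction φ generalizing σ with
  | atom P l => rw [subst, inst, inst, List.map_map, hcomp]
  | bot => rfl
  | imp φ ψ ihφ ihψ => rw [subst, inst, inst, ihφ h.1, ihψ h.2]
  | all y φ ih =>
    by_cases hx : Sum.inl x ∈ (all y φ).fv
    · obtain ⟨hey, hφ⟩ := h.resolve_left (not_not.2 hx)
      have hxy : (Sum.inl x : ℕ ⊕ V) ≠ Sum.inl y := by
        simp only [fv, Finset.mem_sdiff, Finset.mem_singleton] at hx
        exact hx.2
      rw [subst, if_neg hxy, inst, inst, ih hφ, update_of_ne hey, update_comm hxy]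
    · rw [subst_of_notMem_fv hx, inst_update_of_notMem_fv hx]
  | box t X φ ih =>
    by_cases hx : Sum.inl x ∈ X
    · have he : e ∈ X.image (fun v => if v = Sum.inl x then e else v) :=
        Finset.mem_image.2 ⟨_, hx, if_pos rfl⟩
      rw [subst, if_pos hx, inst, inst, ih h.1, Finset.image_image, hcomp, restrict_of_mem σ he]
      refine congrArg (box t _) (inst_congr (fun n hn => ?_) fun c => ?_)
      · obtain rfl | hnx := eq_or_ne n x
        · rw [update_self, restrict_of_mem _ hx, update_self]
        · have hne : (Sum.inl n : ℕ ⊕ V) ≠ Sum.inl x := Sum.inl_injective.ne hnx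
          have hmem := mem_image_ite_iff (e := e) hne fun hve => hve ▸ h.2 (hve ▸ hn)
          simp only [update_of_ne hne, restrict, hmem]
      · rw [update_of_ne Sum.inr_ne_inl]
        exact (update_of_ne Sum.inr_ne_inl _ _).symm
    · have hx : Sum.inl x ∉ (box t X φ).fv := hx
      rw [subst_of_notMem_fv hx, inst_update_of_notMem_fv hx]

theorem exists_of_inr_mem_allVars_inst {σ : ℕ ⊕ V → ℕ ⊕ V'} {φ : Fml V} {a : V'}
    (h : Sum.inr a ∈ (φ.inst σ).allVars) : ∃ v, σ v = Sum.inr a := by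
  induction φ generalizing σ with
  | atom P l =>
    obtain ⟨v, _, hv⟩ := List.mem_map.1 (List.mem_toFinset.1 h)
    exact ⟨v, hv⟩
  | bot => exact absurd h (Finset.notMem_empty _)
  | imp φ ψ ihφ ihψ => exact (Finset.mem_union.1 h).elim ihφ ihψ
  | all x φ ih =>
    obtain ⟨v, hv⟩ := ih (Finset.mem_of_mem_insert_of_ne h Sum.inr_ne_inl)
    obtain rfl | hvx := eq_or_ne v (Sum.inl x)
    · simp at hv
    · exact ⟨v, by rwa [update_of_ne hvx] at hv⟩
  | box t X φ ih =>
    simp only [inst, allVars, Finset.mem_union, Finset.mem_image, reduceCtorEq, and_false,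
      exists_false, or_false] at h
    obtain ⟨v, _, hv⟩ | h := h
    · exact ⟨v, hv⟩
    · obtain ⟨v, hv⟩ := ih h
      exact ⟨v, apply_eq_inr_of_restrict_eq_inr hv⟩

theorem mem_fbv {φ : Fml V} {n : ℕ} : n ∈ φ.fbv ↔ Sum.inl n ∈ φ.fv := by
  simp [fbv]

theorem inl_mem_fv_foldr_all {φ : Fml V} {l : List ℕ} {n : ℕ} :
    Sum.inl n ∈ (l.foldr all φ).fv ↔ Sum.inl n ∈ φ.fv ∧ n ∉ l := by
  induction l with
  | nil => simp
  | cons x l ih => simp [fv, ih, and_assoc, and_comm]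

theorem inl_notMem_fv_close (φ : Fml V) (n : ℕ) : Sum.inl n ∉ φ.close.fv := by
  simp [close, inl_mem_fv_foldr_all, mem_fbv]

end Inst

/-- Every basic variable in the range of `σ` comes from that variable itself, so that no
substitution by `σ` can be captured by a quantifier or a subscript. -/
def CaptureFree {V V' : Type} (σ : ℕ ⊕ V → ℕ ⊕ V') : Prop :=
  ∀ v n, σ v = Sum.inl n → v = Sum.inl n

section CaptureFree

variable {V V' V'' : Type} [DecidableEq V] {σ : ℕ ⊕ V → ℕ ⊕ V'}

theorem CaptureFree.update (hσ : CaptureFree σ) (x : ℕ) :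
    CaptureFree (Function.update σ (Sum.inl x) (Sum.inl x)) := by
  intro v n hv
  obtain rfl | hvx := eq_or_ne v (Sum.inl x)
  · simpa using hv
  · exact hσ v n (by rwa [update_of_ne hvx] at hv)

theorem CaptureFree.restrict (hσ : CaptureFree σ) (X : Finset (ℕ ⊕ V)) :
    CaptureFree (Fml.restrict X σ) := by
  intro v n hv
  rcases v with m | c
  · by_cases hm : Sum.inl m ∈ X
    · exact hσ _ _ (by rwa [restrict_of_mem σ hm] at hv)
    · simpa [restrict_inl_of_notMem σ hm] using hv
  · exact hσ _ _ hv

variable [DecidableEq V']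

theorem CaptureFree.update_comp_update (hσ : CaptureFree σ) (τ : ℕ ⊕ V' → ℕ ⊕ V'') (x : ℕ)
    (e : ℕ ⊕ V'') :
    Function.update τ (Sum.inl x) e ∘ Function.update σ (Sum.inl x) (Sum.inl x) =
      Function.update (τ ∘ σ) (Sum.inl x) e := by
  ext1 v
  obtain rfl | hvx := eq_or_ne v (Sum.inl x)
  · simp
  · have hσx : σ v ≠ Sum.inl x := fun hv => hvx (hσ v x hv)
    simp [hvx, hσx]

theorem CaptureFree.restrict_comp_restrict (hσ : CaptureFree σ) (τ : ℕ ⊕ V' → ℕ ⊕ V'')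
    (X : Finset (ℕ ⊕ V)) :
    Fml.restrict (X.image σ) τ ∘ Fml.restrict X σ = Fml.restrict X (τ ∘ σ) := by
  ext1 (n | c)
  · by_cases hn : Sum.inl n ∈ X
    · rw [comp_apply, restrict_of_mem σ hn, restrict_of_mem _ hn, comp_apply,
        restrict_of_mem τ (Finset.mem_image_of_mem σ hn)]
    · have hn' : Sum.inl n ∉ X.image σ := by
        rintro h
        obtain ⟨v, hv, hvn⟩ := Finset.mem_image.1 h
        exact hn (hσ v n hvn ▸ hv)
      rw [comp_apply, restrict_inl_of_notMem σ hn, restrict_inl_of_notMem _ hn,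
        restrict_inl_of_notMem τ hn']
  · rcases hc : σ (Sum.inr c) with n | a
    · exact absurd (hσ _ _ hc) Sum.inr_ne_inl
    · simp only [comp_apply, Fml.restrict, hc]

variable [DecidableEq V'']

theorem inst_inst (hσ : CaptureFree σ) (τ : ℕ ⊕ V' → ℕ ⊕ V'') (φ : Fml V) :
    (φ.inst σ).inst τ = φ.inst (τ ∘ σ) := by
  induction φ generalizing σ τ with
  | atom P l => rw [inst, inst, inst, List.map_map]
  | bot => rfl
  | imp φ ψ ihφ ihψ => rw [inst, inst, inst, ihφ hσ, ihψ hσ]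
  | all x φ ih => rw [inst, inst, inst, ih (hσ.update x), hσ.update_comp_update]
  | box t X φ ih =>
    rw [inst, inst, inst, ih (hσ.restrict X), hσ.restrict_comp_restrict, Finset.image_image]

end CaptureFree

end Fml

section Satisfaction

variable {D : Type}

/-- The substitution of domain members for basic variables given by an assignment `ρ`. -/
def ground (ρ : ℕ → D) : ℕ ⊕ Empty → ℕ ⊕ D :=
  Sum.elim (Sum.inr ∘ ρ) Empty.elim

theorem captureFree_ground (ρ : ℕ → D) : Fml.CaptureFree (ground ρ) := by
  rintro (n | ⟨⟨⟩⟩) m h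
  exact absurd h Sum.inr_ne_inl

theorem ground_update (ρ : ℕ → D) (x : ℕ) (a : D) :
    ground (update ρ x a) = update (ground ρ) (Sum.inl x) (Sum.inr a) := by
  rw [ground, ground, Sum.update_elim_inl, comp_update]

theorem restrict_ground_congr {X : Finset (ℕ ⊕ Empty)} {ρ ρ' : ℕ → D}
    (h : ∀ n, Sum.inl n ∈ X → ρ n = ρ' n) :
    Fml.restrict X (ground ρ) = Fml.restrict X (ground ρ') :=
  Fml.restrict_congr (fun n hn => congrArg Sum.inr (h n hn)) nofun

variable [DecidableEq D]

theorem inst_update_ground_subst (φ : FmlB) (ρ : ℕ → D) (x : ℕ) (a : D) :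
    (φ.inst (update (ground ρ) (Sum.inl x) (Sum.inl x))).subst (Sum.inl x) (Sum.inr a) =
      φ.inst (ground (update ρ x a)) := by
  rw [Fml.subst_inl_eq_inst, Fml.inst_inst ((captureFree_ground ρ).update x),
    (captureFree_ground ρ).update_comp_update, ground_update, id_comp]

theorem inst_restrict_ground_subst (φ : FmlB) (X : Finset (ℕ ⊕ Empty)) (ρ : ℕ → D) (y : ℕ) :
    (φ.inst (Fml.restrict X (ground ρ))).subst (Sum.inl y) (Sum.inr (ρ y)) =
      φ.inst (Fml.restrict (insert (Sum.inl y) X) (ground ρ)) := by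
  rw [Fml.subst_inl_eq_inst, Fml.inst_inst ((captureFree_ground ρ).restrict X)]
  congr 1
  ext1 (n | ⟨⟨⟩⟩)
  obtain rfl | hny := eq_or_ne n y
  · by_cases hn : Sum.inl n ∈ X <;> simp [Fml.restrict, ground, hn]
  · by_cases hn : Sum.inl n ∈ X <;> simp [Fml.restrict, ground, hn, hny]

theorem inst_restrict_ground_instAll (φ : FmlB) (X : Finset (ℕ ⊕ Empty)) (ρ ρ' : ℕ → D) :
    (φ.inst (Fml.restrict X (ground ρ))).instAll (Sum.inr ∘ ρ') =
      φ.inst (ground fun n => if Sum.inl n ∈ X then ρ n else ρ' n) := by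
  rw [Fml.instAll_eq_inst, Fml.inst_inst ((captureFree_ground ρ).restrict X)]
  congr 1
  ext1 (n | ⟨⟨⟩⟩)
  by_cases hn : Sum.inl n ∈ X <;> simp [Fml.restrict, ground, hn]

theorem toD_eq_inst_restrict_empty (φ : FmlB) (ρ : ℕ → D) :
    toD φ = φ.inst (Fml.restrict ∅ (ground ρ)) := by
  rw [toD, Fml.vmap_eq_inst]
  congr 1
  ext1 (n | ⟨⟨⟩⟩)
  rfl

theorem isRight_of_mem_image_ground {X : Finset (ℕ ⊕ Empty)} {ρ : ℕ → D} {v : ℕ ⊕ D}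
    (hv : v ∈ X.image (ground ρ)) : v.isRight = true := by
  obtain ⟨n | ⟨⟨⟩⟩, _, rfl⟩ := Finset.mem_image.1 hv
  rfl

theorem wvars_inst_restrict_ground_subset (φ : FmlB) (X : Finset (ℕ ⊕ Empty)) (ρ : ℕ → D) :
    (φ.inst (Fml.restrict X (ground ρ))).wvars ⊆ X.image (ground ρ) := by
  intro v hv
  obtain ⟨hmem, hright⟩ := Finset.mem_filter.1 hv
  obtain ⟨a, rfl⟩ := Sum.isRight_iff.1 hright
  obtain ⟨n | ⟨⟨⟩⟩, hn⟩ := Fml.exists_of_inr_mem_allVars_inst hmem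
  have hnX : Sum.inl n ∈ X := by
    by_contra hnX
    exact absurd (Fml.restrict_inl_of_notMem _ hnX ▸ hn) Sum.inl_ne_inr
  exact Finset.mem_image.2 ⟨_, hnX, Fml.apply_eq_inr_of_restrict_eq_inr hn⟩

/-- Truth at `w` of the basic formula `φ` under the assignment `ρ` of domain members to its free
variables. -/
def Satisfies (M : FModel D) (w : M.W) (ρ : ℕ → D) (φ : FmlB) : Prop :=
  Truth M w (φ.inst (ground ρ))

variable {M : FModel D} {w : M.W} {ρ : ℕ → D} {φ ψ : FmlB} {t s : JTerm}
  {X : Finset (ℕ ⊕ Empty)} {x y : ℕ}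

theorem satisfies_congr {ρ' : ℕ → D} (h : ∀ n, Sum.inl n ∈ φ.fv → ρ n = ρ' n) :
    Satisfies M w ρ φ ↔ Satisfies M w ρ' φ := by
  have hinst : φ.inst (ground ρ) = φ.inst (ground ρ') :=
    Fml.inst_congr (fun n hn => congrArg Sum.inr (h n hn)) nofun
  rw [Satisfies, Satisfies, hinst]

theorem satisfies_update_of_notMem_fv (hx : Sum.inl x ∉ φ.fv) (a : D) :
    Satisfies M w (update ρ x a) φ ↔ Satisfies M w ρ φ :=
  satisfies_congr fun _ hn => update_of_ne (by rintro rfl; exact hx hn) _ _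

theorem satisfies_subst (h : φ.freeFor (Sum.inl y) (Sum.inl x)) :
    Satisfies M w ρ (φ.subst (Sum.inl x) (Sum.inl y)) ↔ Satisfies M w (update ρ x (ρ y)) φ := by
  rw [Satisfies, Satisfies, Fml.inst_subst h, ground_update]
  rfl

theorem not_satisfies_bot : ¬ Satisfies M w ρ .bot := by
  simp only [Satisfies, Fml.inst, Truth, not_false_eq_true]

theorem satisfies_imp :
    Satisfies M w ρ (φ.imp ψ) ↔ (Satisfies M w ρ φ → Satisfies M w ρ ψ) := by
  simp only [Satisfies, Fml.inst, Truth]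

theorem satisfies_neg : Satisfies M w ρ φ.neg ↔ ¬ Satisfies M w ρ φ := by
  simp only [Fml.neg, satisfies_imp, not_satisfies_bot, imp_false]

theorem satisfies_all :
    Satisfies M w ρ (.all x φ) ↔ ∀ a, Satisfies M w (update ρ x a) φ := by
  simp only [Satisfies, Fml.inst, Truth, inst_update_ground_subst]

theorem satisfies_box :
    Satisfies M w ρ (.box t X φ) ↔ w ∈ M.E t (φ.inst (Fml.restrict X (ground ρ))) ∧
      ∀ w', M.R w w' → ∀ ρ', (∀ n, Sum.inl n ∈ X → ρ' n = ρ n) → Satisfies M w' ρ' φ := by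
  simp only [Satisfies, Fml.inst, Truth]
  refine and_congr_right fun _ => forall₂_congr fun w' _ => ⟨fun h ρ' hρ' => ?_, fun h σ hσ => ?_⟩
  · have hmerge : (fun n => if Sum.inl n ∈ X then ρ n else ρ' n) = ρ' := by
      ext1 n
      split_ifs with hn
      exacts [(hρ' n hn).symm, rfl]
    simpa only [inst_restrict_ground_instAll, hmerge] using h (Sum.inr ∘ ρ') fun n => ⟨ρ' n, rfl⟩
  · choose ρ' hρ' using hσ
    obtain rfl : σ = Sum.inr ∘ ρ' := funext hρ'
    rw [inst_restrict_ground_instAll]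
    exact h _ fun n hn => if_pos hn

theorem Satisfies.box_of_insert (hy : Sum.inl y ∉ φ.fv)
    (h : Satisfies M w ρ (.box t (insert (Sum.inl y) X) φ)) : Satisfies M w ρ (.box t X φ) := by
  obtain ⟨hE, hR⟩ := satisfies_box.1 h
  have hinst : φ.inst (Fml.restrict (insert (Sum.inl y) X) (ground ρ)) =
      φ.inst (Fml.restrict X (ground ρ)) := by
    refine Fml.inst_congr (fun n hn => ?_) nofun
    have hny : (Sum.inl n : ℕ ⊕ Empty) ≠ Sum.inl y := ne_of_mem_of_not_mem hn hy
    simp only [Fml.restrict, Finset.mem_insert, hny, false_or]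
  refine satisfies_box.2 ⟨hinst ▸ hE, fun w' hw ρ' hρ' => ?_⟩
  rw [← satisfies_update_of_notMem_fv hy (ρ y)]
  refine hR w' hw _ fun n hn => ?_
  obtain rfl | hny := eq_or_ne n y
  · exact update_self ..
  · rw [update_of_ne hny]
    exact hρ' n (Finset.mem_of_mem_insert_of_ne hn (Sum.inl_injective.ne hny))

theorem Satisfies.box_insert (h : Satisfies M w ρ (.box t X φ)) :
    Satisfies M w ρ (.box t (insert (Sum.inl y) X) φ) := by
  obtain ⟨hE, hR⟩ := satisfies_box.1 h
  refine satisfies_box.2 ⟨?_, fun w' hw ρ' hρ' =>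
    hR w' hw ρ' fun n hn => hρ' n (Finset.mem_insert_of_mem hn)⟩
  rw [← inst_restrict_ground_subst]
  exact M.condInst _ _ _ _ hE

theorem Satisfies.of_box (h : Satisfies M w ρ (.box t X φ)) : Satisfies M w ρ φ :=
  (satisfies_box.1 h).2 w (M.refl w) ρ fun _ _ => rfl

theorem Satisfies.box_app (h : Satisfies M w ρ (.box t X (φ.imp ψ)))
    (h' : Satisfies M w ρ (.box s X φ)) : Satisfies M w ρ (.box (t.app s) X ψ) := by
  obtain ⟨hE, hR⟩ := satisfies_box.1 h
  obtain ⟨hE', hR'⟩ := satisfies_box.1 h'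
  exact satisfies_box.2 ⟨M.condApp _ _ _ _ ⟨hE, hE'⟩, fun w' hw ρ' hρ' =>
    satisfies_imp.1 (hR w' hw ρ' hρ') (hR' w' hw ρ' hρ')⟩

theorem Satisfies.box_plus_left (h : Satisfies M w ρ (.box t X φ)) (s : JTerm) :
    Satisfies M w ρ (.box (t.plus s) X φ) :=
  satisfies_box.2 <| (satisfies_box.1 h).imp_left fun hE => M.condPlus _ _ _ (.inl hE)

theorem Satisfies.box_plus_right (h : Satisfies M w ρ (.box s X φ)) (t : JTerm) :
    Satisfies M w ρ (.box (t.plus s) X φ) :=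
  satisfies_box.2 <| (satisfies_box.1 h).imp_left fun hE => M.condPlus _ _ _ (.inr hE)

theorem Satisfies.box_of_accessible {w' : M.W} {ρ' : ℕ → D} (h : Satisfies M w ρ (.box t X φ))
    (hw : M.R w w') (hρ' : ∀ n, Sum.inl n ∈ X → ρ' n = ρ n) : Satisfies M w' ρ' (.box t X φ) := by
  obtain ⟨hE, hR⟩ := satisfies_box.1 h
  refine satisfies_box.2 ⟨?_, fun w'' hw' ρ'' hρ'' =>
    hR w'' (M.trans hw hw') ρ'' fun n hn => (hρ'' n hn).trans (hρ' n hn)⟩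
  rw [restrict_ground_congr hρ']
  exact M.condClosure _ _ hE hw

theorem Satisfies.box_bang (h : Satisfies M w ρ (.box t X φ)) :
    Satisfies M w ρ (.box t.bang X (.box t X φ)) := by
  refine satisfies_box.2 ⟨?_, fun w' hw ρ' hρ' => h.box_of_accessible hw hρ'⟩
  rw [Fml.inst_restrict_box]
  exact M.condBang _ _ _ (fun _ => isRight_of_mem_image_ground)
    (wvars_inst_restrict_ground_subset φ X ρ) (satisfies_box.1 h).1

theorem Satisfies.box_gen (hx : Sum.inl x ∉ X) (h : Satisfies M w ρ (.box t X φ)) :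
    Satisfies M w ρ (.box (t.gen x) X (.all x φ)) := by
  obtain ⟨hE, hR⟩ := satisfies_box.1 h
  refine satisfies_box.2 ⟨?_, fun w' hw ρ' hρ' => satisfies_all.2 fun a =>
    hR w' hw _ fun n hn => ?_⟩
  · rw [Fml.inst_restrict_all hx]
    exact M.condGen _ _ _ hE
  · rw [update_of_ne (by rintro rfl; exact hx hn), hρ' n hn]

theorem Satisfies.box_bb (hy : Sum.inl y ∉ X)
    (h : Satisfies M w ρ (.all y (.box t (insert (Sum.inl y) X) φ))) :
    Satisfies M w ρ (.box t.bb X (.all y φ)) := by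
  have hbox (a : D) := satisfies_box.1 (satisfies_all.1 h a)
  have hupdate (a : D) (n : ℕ) (hn : Sum.inl n ∈ X) : ρ n = update ρ y a n :=
    (update_of_ne (by rintro rfl; exact hy hn) _ _).symm
  refine satisfies_box.2 ⟨?_, fun w' hw ρ' hρ' => satisfies_all.2 fun a =>
    (hbox a).2 w' hw _ fun n hn => ?_⟩
  · rw [Fml.inst_restrict_all hy]
    refine M.condB _ _ _ fun a => ?_
    have hsubst := inst_restrict_ground_subst φ X (update ρ y a) y
    rw [update_self, ← restrict_ground_congr (hupdate a)] at hsubst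
    exact hsubst ▸ (hbox a).1
  · obtain rfl | hny := eq_or_ne n y
    · rw [update_self, update_self]
    · rw [update_of_ne hny, update_of_ne hny]
      exact hρ' n (Finset.mem_of_mem_insert_of_ne hn (Sum.inl_injective.ne hny))

theorem IsAxiom.satisfies (h : IsAxiom Logic.folpb φ) (M : FModel D) (w : M.W) (ρ : ℕ → D) :
    Satisfies M w ρ φ := by
  cases h with
  | a1k => simp only [satisfies_imp]; tauto
  | a1s => simp only [satisfies_imp]; tauto
  | a1dne => simp only [satisfies_imp, satisfies_neg]; tauto
  | a1inst _ x e φ hfree =>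
    obtain y | ⟨⟨⟩⟩ := e
    exact satisfies_imp.2 fun h => (satisfies_subst hfree).2 (satisfies_all.1 h (ρ y))
  | a1allImp =>
    simp only [satisfies_imp, satisfies_all]
    exact fun h h' a => h a (h' a)
  | a1vac _ x φ hx =>
    exact satisfies_imp.2 fun h => satisfies_all.2 fun a =>
      (satisfies_update_of_notMem_fv hx a).2 h
  | a2 _ t X y φ hy =>
    obtain y | ⟨⟨⟩⟩ := y
    exact satisfies_imp.2 (Satisfies.box_of_insert hy)
  | a3 _ t X y φ =>
    obtain y | ⟨⟨⟩⟩ := y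
    exact satisfies_imp.2 Satisfies.box_insert
  | b1 => exact satisfies_imp.2 Satisfies.of_box
  | b2 => exact satisfies_imp.2 fun h => satisfies_imp.2 h.box_app
  | b3l => exact satisfies_imp.2 fun h => h.box_plus_left _
  | b3r => exact satisfies_imp.2 fun h => h.box_plus_right _
  | b4 => exact satisfies_imp.2 Satisfies.box_bang
  | b5 _ t X x φ hx => exact satisfies_imp.2 (Satisfies.box_gen hx)
  | bb t X y φ hy => exact satisfies_imp.2 (Satisfies.box_bb hy)

theorem Satisfies.of_mem_constantSpec {CS : Set FmlB} (hCS : IsCS Logic.folpb CS)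
    (hM : Meets M CS) (hφ : φ ∈ CS) : Satisfies M w ρ φ := by
  obtain ⟨c, ψ, rfl, hψ⟩ := hCS φ hφ
  refine satisfies_box.2 ⟨?_, fun w' _ ρ' _ => hψ.satisfies M w' ρ'⟩
  rw [← toD_eq_inst_restrict_empty]
  exact hM c ψ hφ w

theorem soundness_general {CS Γ : Set FmlB} (hCS : IsCS Logic.folpb CS)
    (h : Deriv Logic.folpb CS Γ φ) (hM : Meets M CS) (hΓ : ∀ ψ ∈ Γ, Satisfies M w ρ ψ) :
    Satisfies M w ρ φ := by
  induction h generalizing ρ with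
  | ax hφ => exact hφ.satisfies M w ρ
  | cs hφ => exact .of_mem_constantSpec hCS hM hφ
  | hyp hφ => exact hΓ _ hφ
  | mp _ _ ihimp ihφ => exact satisfies_imp.1 (ihimp hΓ) (ihφ hΓ)
  | genR _ hx ih =>
    exact satisfies_all.2 fun a => ih fun ψ hψ =>
      (satisfies_update_of_notMem_fv (hx ψ hψ) a).2 (hΓ ψ hψ)

theorem truth_toD_iff_satisfies (hφ : ∀ n, Sum.inl n ∉ φ.fv) (ρ : ℕ → D) :
    Truth M w (toD φ) ↔ Satisfies M w ρ φ := by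
  have hinst : φ.inst (Fml.restrict ∅ (ground ρ)) = φ.inst (ground ρ) :=
    Fml.inst_congr (fun n hn => absurd hn (hφ n)) nofun
  rw [toD_eq_inst_restrict_empty φ ρ, hinst, Satisfies]

theorem forall_satisfies_foldr_all (l : List ℕ) :
    (∀ ρ, Satisfies M w ρ (l.foldr Fml.all φ)) ↔ ∀ ρ, Satisfies M w ρ φ := by
  induction l with
  | nil => rfl
  | cons x l ih =>
    simp only [← ih, List.foldr_cons, satisfies_all]
    exact ⟨fun h ρ => by simpa using h ρ (ρ x), fun h ρ a => h _⟩

theorem valid_iff_forall_satisfies [Nonempty D] :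
    Valid M φ ↔ ∀ w ρ, Satisfies M w ρ φ := by
  simp only [← forall_satisfies_foldr_all (φ := φ) φ.fbv.toList]
  exact forall_congr' fun w =>
    (forall_const (ℕ → D)).symm.trans
      (forall_congr' (truth_toD_iff_satisfies φ.inl_notMem_fv_close))

end Satisfaction

/-- **Soundness of FOLPb**: if `⊢_CS φ` then `φ` is valid in every Fitting model for
FOLPb meeting `CS`. -/
theorem soundness (CS : Set FmlB) (hCS : IsCS Logic.folpb CS) (φ : FmlB)
    (h : Deriv Logic.folpb CS ∅ φ) :
    ∀ (D : Type) [DecidableEq D] [Nonempty D] (M : FModel D),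
      Meets M CS → Valid M φ :=
  fun _ _ _ _ hM => valid_iff_forall_satisfies.2 fun _ _ =>
    soundness_general hCS h hM fun _ hψ => hψ.elim
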